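/- Let h be a symmetric bilinear form on V with associated symmetric endomorphism H and let 1 ≤ p ≤ n. Every p-form ω on V satisfies ⟨Ric_{h⧆g}(ω), ω⟩ = −(n−2p)·⟨Hω, ω⟩ + p·tr(h)·|ω|². -/

import Mathlib

/-!
The identity holds pointwise, before pairing with `ω`:
`Ric_{h⧆g}(ω) = -(n - 2p) Hω + p tr(h) ω` (`ricTerm_knProd`).

Here `R(X,Y)Z = h(X,Z) Y - g(Y,Z) HX + g(X,Z) HY - h(Y,Z) X` (`curvOp_knProd`). In the double sum
over slots defining `Ric_R(ω)`, the slot that holds `eⱼ` contributes the trace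
`∑ⱼ R(X,eⱼ)eⱼ = -(n - 2) HX - tr(h) X` (`sum_curvOp_self`). For two distinct slots `i, k`,
freezing the remaining arguments turns `ω` into an alternating bilinear form `B` (`twoSlot`), and
`∑ⱼ B(eⱼ, R(x,eⱼ)y) = B(Hx, y) + B(x, Hy)` (`sum_twoSlot`): the terms with `B(eⱼ, eⱼ)` and
`∑ⱼ B(eⱼ, Heⱼ)` vanish, the latter because `H` is symmetric. Summing over `i ≠ k` gives
`2(p - 1)` times `∑ᵢ ω(…, HXᵢ, …)`, whence the coefficient `(n - 2) - 2(p - 1) = n - 2p`.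
-/

open scoped RealInnerProductSpace BigOperators
open Finset

noncomputable section

variable {V : Type*} [NormedAddCommGroup V] [InnerProductSpace ℝ V]

/-- The action `(L T)(X₁,…,X_k) = −Σᵢ T(X₁,…,L(Xᵢ),…,X_k)` of a map `L : V → V`
on a `(0,k)`-tensor `T`. -/
def tact {k : ℕ} (L : V → V) (T : (Fin k → V) → ℝ) (X : Fin k → V) : ℝ :=
  -∑ i, T (Function.update X i (L (X i)))

/-- The Kulkarni–Nomizu product of two bilinear forms. -/
def knProd (s₁ s₂ : V → V → ℝ) (X Y Z W : V) : ℝ :=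
  s₁ X Z * s₂ Y W - s₁ X W * s₂ Y Z + s₁ Y W * s₂ X Z - s₁ Y Z * s₂ X W

/-- The inner product `g` as a bilinear form. -/
def gf (X Y : V) : ℝ := ⟪X, Y⟫

/-- The curvature endomorphism `R(X,Y)`, determined by `g(R(X,Y)Z,W) = R(X,Y,Z,W)`,
expressed via the orthonormal basis `e`. -/
def curvOp {n : ℕ} (e : Fin n → V) (R : V → V → V → V → ℝ) (X Y Z : V) : V :=
  ∑ a, R X Y Z (e a) • e a

/-- The curvature term `Ric_R(T)(X₁,…,X_k) = Σᵢ Σⱼ ((R(Xᵢ,eⱼ))T)(X₁,…,eⱼ,…,X_k)`. -/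
def ricTerm {n k : ℕ} (e : Fin n → V) (R : V → V → V → V → ℝ)
    (T : (Fin k → V) → ℝ) (X : Fin k → V) : ℝ :=
  ∑ i : Fin k, ∑ j : Fin n, tact (curvOp e R (X i) (e j)) T (Function.update X i (e j))

/-- The inner product of two `(0,k)`-tensors with respect to the orthonormal basis `e`. -/
def tinner {n k : ℕ} (e : Fin n → V) (S T : (Fin k → V) → ℝ) : ℝ :=
  ∑ I : Fin k → Fin n, S (fun m => e (I m)) * T (fun m => e (I m))

/-- The skew endomorphism `(A ∧ B)Z = g(A,Z)B − g(B,Z)A`. -/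
def wedgeOp (A B Z : V) : V := ⟪A, Z⟫ • B - ⟪B, Z⟫ • A

section Pointwise

variable {n p : ℕ} (e : OrthonormalBasis (Fin n) ℝ V) (H : V →ₗ[ℝ] V)
  (h : V → V → ℝ) (ω : AlternatingMap ℝ V ℝ (Fin p))

lemma curvOp_knProd (hh : ∀ X Y : V, h X Y = ⟪H X, Y⟫) (X Y Z : V) :
    curvOp ⇑e (knProd h gf) X Y Z =
      h X Z • Y - ⟪Y, Z⟫ • H X + ⟪X, Z⟫ • H Y - h Y Z • X := by
  have key : ∀ v : V, ∑ a, ⟪v, e a⟫ • e a = v := fun v => by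
    simpa only [real_inner_comm] using e.sum_repr' v
  conv_rhs => rw [← key (h X Z • Y - ⟪Y, Z⟫ • H X + ⟪X, Z⟫ • H Y - h Y Z • X)]
  unfold curvOp knProd gf
  refine Finset.sum_congr rfl fun a _ => ?_
  congr 1
  simp only [inner_sub_left, inner_add_left, real_inner_smul_left, hh]
  ring

lemma sum_curvOp_self (hh : ∀ X Y : V, h X Y = ⟪H X, Y⟫) (X : V) :
    ∑ j, curvOp ⇑e (knProd h gf) X (e j) (e j) =
      -((n : ℝ) - 2) • H X - (∑ a, h (e a) (e a)) • X := by
  have key : ∀ v : V, ∑ a, ⟪v, e a⟫ • e a = v := fun v => by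
    simpa only [real_inner_comm] using e.sum_repr' v
  have h1 : ∑ j, h X (e j) • e j = H X := by
    simp only [hh]
    exact key _
  have h2 : ∑ j, ⟪X, e j⟫ • H (e j) = H X := by
    conv_rhs => rw [← key X, map_sum]
    simp only [map_smul]
  have h3 : ∀ j, ⟪e j, e j⟫ = 1 := fun j => by
    rw [real_inner_self_eq_norm_sq, e.norm_eq_one, one_pow]
  simp only [curvOp_knProd e H h hh, Finset.sum_sub_distrib, Finset.sum_add_distrib, h1, h2, h3,
    ← Finset.sum_smul]
  simp only [Finset.sum_const, Finset.card_univ, Fintype.card_fin, nsmul_eq_mul, mul_one]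
  module

/-- The bilinear form obtained from `ω` by fixing all arguments except those in slots `i ≠ k`. -/
def twoSlot (X : Fin p → V) {i k : Fin p} (hik : i ≠ k) : V →ₗ[ℝ] V →ₗ[ℝ] ℝ :=
  LinearMap.mk₂ ℝ (fun a b => ω (Function.update (Function.update X i a) k b))
    (fun a a' b => by
      simp only [Function.update_comm hik, AlternatingMap.map_update_add])
    (fun c a b => by
      simp only [Function.update_comm hik, AlternatingMap.map_update_smul])
    (fun a b b' => by simp only [AlternatingMap.map_update_add])
    (fun c a b => by simp only [AlternatingMap.map_update_smul])

lemma twoSlot_apply (X : Fin p → V) {i k : Fin p} (hik : i ≠ k) (a b : V) :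
    twoSlot ω X hik a b = ω (Function.update (Function.update X i a) k b) := rfl

lemma twoSlot_self (X : Fin p → V) {i k : Fin p} (hik : i ≠ k) (a : V) :
    twoSlot ω X hik a a = 0 := by
  rw [twoSlot_apply]
  exact ω.map_eq_zero_of_eq _ (by simp [hik]) hik

lemma alternating_swap {B : V →ₗ[ℝ] V →ₗ[ℝ] ℝ} (hB : ∀ a, B a a = 0) (a b : V) :
    B a b = -B b a := by
  have := hB (a + b)
  simp only [map_add, LinearMap.add_apply, hB] at this
  linarith

/-- An alternating form has zero trace against a symmetric endomorphism. -/
lemma sum_alternating_symm (hHsym : ∀ X Y : V, ⟪H X, Y⟫ = ⟪X, H Y⟫)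
    {B : V →ₗ[ℝ] V →ₗ[ℝ] ℝ} (hB : ∀ a, B a a = 0) :
    ∑ j, B (e j) (H (e j)) = 0 := by
  have key : ∀ v : V, ∑ a, ⟪v, e a⟫ • e a = v := fun v => by
    simpa only [real_inner_comm] using e.sum_repr' v
  have h1 : ∑ j, B (e j) (H (e j)) = ∑ j, ∑ a, ⟪H (e j), e a⟫ * B (e j) (e a) := by
    refine Finset.sum_congr rfl fun j _ => ?_
    conv_lhs => rw [← key (H (e j)), map_sum]
    simp only [map_smul, smul_eq_mul]
  have h2 : ∑ j, ∑ a, ⟪H (e j), e a⟫ * B (e j) (e a)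
      = -∑ j, ∑ a, ⟪H (e j), e a⟫ * B (e j) (e a) := by
    conv_lhs => rw [Finset.sum_comm]
    simp only [← Finset.sum_neg_distrib]
    refine Finset.sum_congr rfl fun j _ => Finset.sum_congr rfl fun a _ => ?_
    rw [alternating_swap hB (e a) (e j), hHsym, real_inner_comm]
    ring
  rw [h1]
  linarith

lemma sum_twoSlot (hh : ∀ X Y : V, h X Y = ⟪H X, Y⟫)
    (hHsym : ∀ X Y : V, ⟪H X, Y⟫ = ⟪X, H Y⟫)
    {B : V →ₗ[ℝ] V →ₗ[ℝ] ℝ} (hB : ∀ a, B a a = 0) (x y : V) :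
    ∑ j, B (e j) (curvOp ⇑e (knProd h gf) x (e j) y) = B (H x) y + B x (H y) := by
  have key : ∀ v w : V, ∑ a, ⟪e a, v⟫ * B (e a) w = B v w := fun v w => by
    conv_rhs => rw [← e.sum_repr' v]
    simp only [map_sum, map_smul, LinearMap.sum_apply, LinearMap.smul_apply, smul_eq_mul]
  simp only [curvOp_knProd e H h hh, map_sub, map_add, map_smul, smul_eq_mul, hB, mul_zero,
    Finset.sum_sub_distrib, Finset.sum_add_distrib, ← Finset.mul_sum,
    sum_alternating_symm e H hHsym hB]
  simp only [hh, hHsym (e _) y, key, Finset.sum_const_zero]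
  rw [alternating_swap hB y, alternating_swap hB (H y)]
  ring

/-- Contribution of the slots `i ≠ k` to the curvature term. -/
lemma sum_offDiag (hh : ∀ X Y : V, h X Y = ⟪H X, Y⟫)
    (hHsym : ∀ X Y : V, ⟪H X, Y⟫ = ⟪X, H Y⟫) (X : Fin p → V) {i k : Fin p} (hik : i ≠ k) :
    ∑ j, ω (Function.update (Function.update X i (e j)) k
        (curvOp ⇑e (knProd h gf) (X i) (e j) (Function.update X i (e j) k))) =
      ω (Function.update X i (H (X i))) + ω (Function.update X k (H (X k))) := by
  have := sum_twoSlot e H h hh hHsym (twoSlot_self ω X hik) (X i) (X k)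
  simp only [twoSlot_apply] at this
  simp only [Function.update_of_ne hik.symm, this, Function.update_eq_self]
  rw [Function.update_comm hik, Function.update_eq_self]

/-- Contribution of the slot `i` itself to the curvature term. -/
lemma sum_diag (hh : ∀ X Y : V, h X Y = ⟪H X, Y⟫) (X : Fin p → V) (i : Fin p) :
    ∑ j, ω (Function.update (Function.update X i (e j)) i
        (curvOp ⇑e (knProd h gf) (X i) (e j) (Function.update X i (e j) i))) =
      -((n : ℝ) - 2) * ω (Function.update X i (H (X i))) - (∑ a, h (e a) (e a)) * ω X := by
  simp only [Function.update_idem, Function.update_self]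
  rw [← ω.map_update_sum, sum_curvOp_self e H h hh, AlternatingMap.map_update_sub,
    AlternatingMap.map_update_smul, AlternatingMap.map_update_smul, Function.update_eq_self]
  simp only [smul_eq_mul]

lemma ricTerm_knProd (hh : ∀ X Y : V, h X Y = ⟪H X, Y⟫)
    (hHsym : ∀ X Y : V, ⟪H X, Y⟫ = ⟪X, H Y⟫) (X : Fin p → V) :
    ricTerm ⇑e (knProd h gf) ⇑ω X =
      -((n : ℝ) - 2 * p) * tact ⇑H ⇑ω X + (p : ℝ) * (∑ a, h (e a) (e a)) * ω X := by
  set t := ∑ a, h (e a) (e a) with ht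
  set D : Fin p → ℝ := fun i => ω (Function.update X i (H (X i))) with hD
  -- The diagonal value is written as the off-diagonal one, `D i + D i`, plus a correction.
  have hsum : ∀ i k : Fin p, ∑ j, ω (Function.update (Function.update X i (e j)) k
        (curvOp ⇑e (knProd h gf) (X i) (e j) (Function.update X i (e j) k))) =
      (D i + D k) + if i = k then -(n : ℝ) * D i - t * ω X else 0 := by
    intro i k
    split_ifs with hik
    · subst hik
      rw [sum_diag e H h ω hh]
      simp only [hD, ht]
      ring
    · rw [sum_offDiag e H h ω hh hHsym X hik, add_zero]
  unfold ricTerm tact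
  simp only [Finset.sum_neg_distrib]
  have hcomm : ∀ i : Fin p, ∑ j, ∑ k, ω (Function.update (Function.update X i (e j)) k
        (curvOp ⇑e (knProd h gf) (X i) (e j) (Function.update X i (e j) k))) =
      ∑ k, ((D i + D k) + if i = k then -(n : ℝ) * D i - t * ω X else 0) := fun i => by
    rw [Finset.sum_comm]
    exact Finset.sum_congr rfl fun k _ => hsum i k
  simp only [hcomm, Finset.sum_add_distrib, Finset.sum_ite_eq, Finset.mem_univ, if_true,
    Finset.sum_sub_distrib, Finset.sum_const, Finset.card_univ, Fintype.card_fin, nsmul_eq_mul,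
    ← Finset.mul_sum]
  ring

end Pointwise

/-- Proposition 3.3(2), second identity. -/
theorem stmt7 {n p : ℕ} (hp : 1 ≤ p) (hpn : p ≤ n) (e : OrthonormalBasis (Fin n) ℝ V)
    (H : V →ₗ[ℝ] V) (hHsym : ∀ X Y : V, ⟪H X, Y⟫ = ⟪X, H Y⟫)
    (h : V → V → ℝ) (hh : ∀ X Y : V, h X Y = ⟪H X, Y⟫)
    (ω : AlternatingMap ℝ V ℝ (Fin p)) :
    tinner ⇑e (ricTerm ⇑e (knProd h gf) ⇑ω) ⇑ω =
      -((n : ℝ) - 2 * p) * tinner ⇑e (tact ⇑H ⇑ω) ⇑ω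
      + (p : ℝ) * (∑ a : Fin n, h (e a) (e a)) * tinner ⇑e ⇑ω ⇑ω := by
  unfold tinner
  simp only [ricTerm_knProd e H h ω hh hHsym, add_mul, Finset.sum_add_distrib, Finset.mul_sum,
    mul_assoc]
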